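/- Let n = p + q and for each subset A ⊆ {1,…,n} let e_A be the corresponding basis element of Cl_{p,q} (product of generators with increasing indices, e_∅ = e); each e_A is invertible. Define the linear operator F(U) := 2^{−n} · Σ_{A ⊆ {1,…,n}} (e_A)^{−1} U e_A on Cl_{p,q}. Then: (1) F(U) lies in the center Cen(Cl_{p,q}) for every U ∈ Cl_{p,q}; (2) F(U) = U for every U ∈ Cen(Cl_{p,q}); consequently (3) F ∘ F = F, i.e. F is the projection onto the center of Cl_{p,q}. -/

import Mathlib

open CliffordAlgebra

/-- The quadratic form of signature `(p, q)` on `ℝ^(p+q)`: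
`Q(x) = x₁² + ⋯ + x_p² − x_{p+1}² − ⋯ − x_{p+q}²`. -/
noncomputable def Qpq (p q : ℕ) : QuadraticForm ℝ (Fin (p + q) → ℝ) :=
  QuadraticMap.weightedSumSquares ℝ (fun i : Fin (p + q) => if (i : ℕ) < p then (1 : ℝ) else -1)

/-- The real Clifford algebra `Cl_{p,q}`. -/
noncomputable abbrev Cl (p q : ℕ) : Type := CliffordAlgebra (Qpq p q)

/-- The generators `e_a` of `Cl_{p,q}`. -/
noncomputable def gen (p q : ℕ) (i : Fin (p + q)) : Cl p q :=
  ι (Qpq p q) (Pi.single i 1)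

/-- The basis element `e_A` of `Cl_{p,q}` attached to an ordered multi-index `A`:
the product of the generators with indices in `A`, in increasing order (`e_∅ = 1`). -/
noncomputable def basisEl (p q : ℕ) (A : Finset (Fin (p + q))) : Cl p q :=
  ((A.sort (· ≤ ·)).map (gen p q)).prod


/-- The averaging (Reynolds) operator `F(U) = 2^{−n} Σ_A (e_A)⁻¹ U e_A`. -/
noncomputable def Favg (p q : ℕ) (U : Cl p q) : Cl p q :=
  ((2 : ℝ) ^ (p + q))⁻¹ •
    ∑ A : Finset (Fin (p + q)), Ring.inverse (basisEl p q A) * U * basisEl p q A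

/-!
Conjugations by the generators are commuting involutions of the algebra, because the generators
commute up to central factors and have central squares. Hence conjugation by `e_A` followed by
conjugation by `e_i` is conjugation by `e_{A ∆ {i}}`, and since `A ↦ A ∆ {i}` permutes the subsets,
the sum of all conjugates of `U` commutes with every generator.
-/

section OrderedProd

variable {ι M N : Type*} [LinearOrder ι] [Monoid M] [Monoid N]

/-- The product of the `f i`, `i ∈ A`, taken in increasing order of the indices: the monomial `e_A`
attached to a family of generators that need not commute. -/
def orderedProd (f : ι → M) (A : Finset ι) : M :=
  ((A.sort (· ≤ ·)).map f).prod

theorem map_orderedProd (φ : M →* N) (f : ι → M) (A : Finset ι) :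
    φ (orderedProd f A) = orderedProd (φ ∘ f) A := by
  simp only [orderedProd, map_list_prod, List.map_map]

theorem isUnit_orderedProd {f : ι → M} (hf : ∀ i, IsUnit (f i)) (A : Finset ι) :
    IsUnit (orderedProd f A) := by
  lift f to ι → Mˣ using hf
  exact ⟨_, map_orderedProd (Units.coeHom M) f A⟩

theorem orderedProd_insert {f : ι → M} (hcomm : ∀ i j, Commute (f i) (f j)) {A : Finset ι} {i : ι}
    (hi : i ∉ A) : orderedProd f (insert i A) = orderedProd f A * f i := by
  have hperm : ((insert i A).sort (· ≤ ·)).Perm (A.sort (· ≤ ·) ++ [i]) := by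
    rw [List.perm_ext_iff_of_nodup (Finset.sort_nodup _ _)] <;>
      simp [List.nodup_append, hi, or_comm]
  have hpairwise : (((insert i A).sort (· ≤ ·)).map f).Pairwise Commute :=
    List.pairwise_map.2 (List.pairwise_of_forall hcomm)
  simpa [orderedProd] using (hperm.map f).prod_eq' hpairwise

theorem orderedProd_symmDiff_singleton {f : ι → M} (hcomm : ∀ i j, Commute (f i) (f j))
    (hinv : ∀ i, f i * f i = 1) (A : Finset ι) (i : ι) :
    orderedProd f (symmDiff A {i}) = orderedProd f A * f i := by
  by_cases hi : i ∈ A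
  · have herase : symmDiff A {i} = A.erase i := by
      grind [Finset.mem_symmDiff]
    calc orderedProd f (symmDiff A {i})
        = orderedProd f (A.erase i) * f i * f i := by rw [herase, mul_assoc, hinv, mul_one]
      _ = orderedProd f A * f i := by
        rw [← orderedProd_insert hcomm (Finset.notMem_erase i A), Finset.insert_erase hi]
  · have hinsert : symmDiff A {i} = insert i A := by
      grind [Finset.mem_symmDiff]
    rw [hinsert, orderedProd_insert hcomm hi]

theorem smul_sum_orderedProd_inv_smul {G V : Type*} [Fintype ι] [Group G] [AddCommMonoid V]
    [DistribMulAction G V] {f : ι → G} (hcomm : ∀ i j, Commute (f i) (f j))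
    (hinv : ∀ i, f i * f i = 1) (i : ι) (v : V) :
    f i • ∑ A, (orderedProd f A)⁻¹ • v = ∑ A, (orderedProd f A)⁻¹ • v := by
  have hinvol : Function.Involutive fun A : Finset ι ↦ symmDiff A {i} := fun A ↦ by simp
  rw [← eq_inv_smul_iff, Finset.smul_sum, ← Equiv.sum_comp hinvol.toPerm]
  refine Finset.sum_congr rfl fun A _ ↦ ?_
  rw [Function.Involutive.coe_toPerm, orderedProd_symmDiff_singleton hcomm hinv, mul_inv_rev,
    mul_smul]

end OrderedProd

section UnitsConj

variable {A : Type*} [Semiring A]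

/-- Conjugation `x ↦ u * x * u⁻¹` by units, as a homomorphism to the ring automorphisms. -/
def unitsConj : Aˣ →* RingAut A :=
  (MulSemiringAction.toRingAut (ConjAct Aˣ) A).comp ConjAct.toConjAct.toMonoidHom

theorem unitsConj_apply (u : Aˣ) (x : A) : unitsConj u x = u * x * ↑u⁻¹ := rfl

theorem unitsConj_smul_eq_iff_commute {u : Aˣ} {x : A} : unitsConj u • x = x ↔ Commute ↑u x :=
  Units.mul_inv_eq_iff_eq_mul u

theorem unitsConj_eq_of_eq_mul {u v : Aˣ} {z : A} (hz : z ∈ Set.center A)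
    (huv : (u : A) = z * v) : unitsConj u = unitsConj v := by
  ext x
  rw [unitsConj_apply, unitsConj_apply, Units.mul_inv_eq_iff_eq_mul]
  calc u * x = z * (v * x) := by rw [huv, mul_assoc]
    _ = v * x * z := (hz.comm _).eq
    _ = v * x * ↑v⁻¹ * (v * z) := by rw [← mul_assoc, Units.inv_mul_cancel_right]
    _ = v * x * ↑v⁻¹ * u := by rw [huv, (hz.comm _).eq]

end UnitsConj

theorem commute_of_adjoin_eq_top {R A : Type*} [CommSemiring R] [Semiring A] [Algebra R A]
    {s : Set A} (hs : Algebra.adjoin R s = ⊤) {W : A} (hW : ∀ x ∈ s, Commute x W) (V : A) :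
    Commute W V :=
  Algebra.adjoin_le_centralizer_centralizer R s (hs ▸ Algebra.mem_top : V ∈ _) W hW

section OrderedAverage

variable {ι : Type*} [LinearOrder ι] [Fintype ι]
variable (R : Type*) {A : Type*} [CommSemiring R] [Invertible (2 : R)] [Semiring A] [Algebra R A]

/-- The averaging operator `U ↦ 2^{−n} Σ_S (e_S)⁻¹ U e_S` of a finite family `e` of elements of an
`R`-algebra, where `e_S` is the ordered product of the `e i`, `i ∈ S`.
The inverse is `Ring.inverse`, which is `0` at non-units, so the `e i` should be units. -/
noncomputable def orderedAverage (e : ι → A) (U : A) : A :=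
  (⅟2 : R) ^ Fintype.card ι •
    ∑ S : Finset ι, Ring.inverse (orderedProd e S) * U * orderedProd e S

variable {R}

theorem orderedAverage_of_commute {e : ι → A} (he : ∀ i, IsUnit (e i)) {U : A}
    (hU : ∀ V, Commute U V) : orderedAverage R e U = U := by
  have hconj (S : Finset ι) : Ring.inverse (orderedProd e S) * U * orderedProd e S = U := by
    rw [mul_assoc, hU, Ring.inverse_mul_cancel_left _ _ (isUnit_orderedProd he S)]
  simp only [orderedAverage, hconj, Finset.sum_const, Finset.card_univ, Fintype.card_finset]
  rw [← Nat.cast_smul_eq_nsmul R, smul_smul, Nat.cast_pow, Nat.cast_ofNat, ← mul_pow,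
    invOf_mul_self, one_pow, one_smul]

theorem orderedAverage_coe_units (u : ι → Aˣ) (U : A) :
    orderedAverage R (fun i ↦ (u i : A)) U =
      (⅟2 : R) ^ Fintype.card ι • ∑ S, (orderedProd (unitsConj ∘ u) S)⁻¹ • U := by
  have hcoe (S : Finset ι) : orderedProd (fun i ↦ (u i : A)) S = orderedProd u S :=
    (map_orderedProd (Units.coeHom A) u S).symm
  simp only [orderedAverage, hcoe, Ring.inverse_unit, ← map_orderedProd, ← map_inv,
    RingAut.smul_def, unitsConj_apply, inv_inv]

theorem commute_orderedAverage {e : ι → A} (he : ∀ i, IsUnit (e i))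
    (hsq : ∀ i, e i * e i ∈ Set.center A)
    (hcomm : ∀ i j, ∃ z ∈ Set.center A, e i * e j = z * (e j * e i)) (U : A) (i : ι) :
    Commute (e i) (orderedAverage R e U) := by
  lift e to ι → Aˣ using he
  have hconj_comm (i j : ι) : Commute (unitsConj (e i)) (unitsConj (e j)) := by
    obtain ⟨z, hz, hij⟩ := hcomm i j
    simpa only [Commute, SemiconjBy, map_mul] using
      unitsConj_eq_of_eq_mul (u := e i * e j) (v := e j * e i) hz hij
  have hconj_sq (i : ι) : unitsConj (e i) * unitsConj (e i) = 1 := by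
    simpa only [map_mul, map_one] using
      unitsConj_eq_of_eq_mul (u := e i * e i) (v := 1) (hsq i) (mul_one _).symm
  rw [orderedAverage_coe_units]
  refine Commute.smul_right (unitsConj_smul_eq_iff_commute.1 ?_) _
  exact smul_sum_orderedProd_inv_smul hconj_comm hconj_sq i U

theorem averaging_projects_onto_center_general {e : ι → A}
    (hgen : Algebra.adjoin R (Set.range e) = ⊤) (he : ∀ i, IsUnit (e i))
    (hsq : ∀ i, e i * e i ∈ Set.center A)
    (hcomm : ∀ i j, ∃ z ∈ Set.center A, e i * e j = z * (e j * e i)) :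
    (∀ S, IsUnit (orderedProd e S)) ∧
    (∀ U V, Commute (orderedAverage R e U) V) ∧
    (∀ U, (∀ V, Commute U V) → orderedAverage R e U = U) ∧
    orderedAverage R e ∘ orderedAverage R e = orderedAverage R e := by
  have hcenter (U V : A) : Commute (orderedAverage R e U) V :=
    commute_of_adjoin_eq_top hgen
      (Set.forall_mem_range.2 (commute_orderedAverage he hsq hcomm U)) V
  have hfix (U : A) (hU : ∀ V, Commute U V) : orderedAverage R e U = U :=
    orderedAverage_of_commute he hU
  exact ⟨isUnit_orderedProd he, hcenter, hfix, funext fun U ↦ hfix _ (hcenter U)⟩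

end OrderedAverage

theorem adjoin_range_ι_comp_eq_top {κ R M : Type*} [CommRing R] [AddCommGroup M] [Module R M]
    (Q : QuadraticForm R M) {v : κ → M} (hv : Submodule.span R (Set.range v) = ⊤) :
    Algebra.adjoin R (Set.range (ι Q ∘ v)) = ⊤ := by
  rw [← Algebra.adjoin_span, Set.range_comp, Submodule.span_image, hv, Submodule.map_top,
    LinearMap.coe_range, adjoin_range_ι]

section WeightedSumSquares

variable {κ R S : Type*} [Fintype κ] [DecidableEq κ] [CommSemiring R] [Monoid S]
  [DistribMulAction S R] [SMulCommClass S R R] (w : κ → S)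

theorem weightedSumSquares_single (i : κ) (a : R) :
    QuadraticMap.weightedSumSquares R w (Pi.single i a) = w i • (a * a) := by
  rw [QuadraticMap.weightedSumSquares_apply, Finset.sum_eq_single i] <;>
    simp +contextual [Pi.single_eq_of_ne]

theorem isOrtho_weightedSumSquares_single {i j : κ} (hij : i ≠ j) (a b : R) :
    (QuadraticMap.weightedSumSquares R w).IsOrtho (Pi.single i a) (Pi.single j b) := by
  simp only [QuadraticMap.isOrtho_def, QuadraticMap.weightedSumSquares_apply,
    ← Finset.sum_add_distrib, ← smul_add]
  refine Finset.sum_congr rfl fun k _ ↦ ?_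
  obtain rfl | hki := eq_or_ne k i
  · simp [hij]
  · simp [hki]

end WeightedSumSquares

section Gen

variable (p q : ℕ)

theorem isUnit_gen (i : Fin (p + q)) : IsUnit (gen p q i) := by
  refine isUnit_ι_of_isUnit _ ?_
  rw [Qpq, weightedSumSquares_single]
  split_ifs <;> simp

theorem gen_mul_self_mem_center (i : Fin (p + q)) :
    gen p q i * gen p q i ∈ Set.center (Cl p q) := by
  rw [gen, ι_sq_scalar]
  exact (Subalgebra.center ℝ (Cl p q)).algebraMap_mem _

theorem exists_center_gen_mul_gen (i j : Fin (p + q)) :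
    ∃ z ∈ Set.center (Cl p q), gen p q i * gen p q j = z * (gen p q j * gen p q i) := by
  obtain rfl | hij := eq_or_ne i j
  · exact ⟨1, Set.one_mem_center, (one_mul _).symm⟩
  · refine ⟨-1, Set.neg_mem_center Set.one_mem_center, ?_⟩
    rw [neg_one_mul]
    exact ι_mul_ι_comm_of_isOrtho (isOrtho_weightedSumSquares_single _ hij 1 1)

theorem adjoin_range_gen : Algebra.adjoin ℝ (Set.range (gen p q)) = ⊤ := by
  have hgen : gen p q = ι (Qpq p q) ∘ Pi.basisFun ℝ (Fin (p + q)) := by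
    funext i
    rw [gen, Function.comp_apply, Pi.basisFun_apply]
  rw [hgen]
  exact adjoin_range_ι_comp_eq_top _ (Pi.basisFun ℝ (Fin (p + q))).span_eq

theorem Favg_eq_orderedAverage : Favg p q = orderedAverage ℝ (gen p q) := by
  funext U
  simp only [Favg, basisEl, orderedAverage, orderedProd, Fintype.card_fin, invOf_eq_inv, inv_pow]

end Gen

/-- Each `e_A` is invertible; `F(U)` always lies in the center of `Cl_{p,q}`;
`F` restricts to the identity on the center; hence `F ∘ F = F`
(`F` is the projection onto the center). -/
theorem averaging_projects_onto_center (p q : ℕ) :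
    (∀ A : Finset (Fin (p + q)), IsUnit (basisEl p q A)) ∧
    (∀ U V : Cl p q, Favg p q U * V = V * Favg p q U) ∧
    (∀ U : Cl p q, (∀ V : Cl p q, U * V = V * U) → Favg p q U = U) ∧
    (Favg p q ∘ Favg p q = Favg p q) := by
  rw [Favg_eq_orderedAverage]
  exact averaging_projects_onto_center_general (adjoin_range_gen p q) (isUnit_gen p q)
    (gen_mul_self_mem_center p q) (exists_center_gen_mul_gen p q)
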